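/- Let g : ℝ^n → ℝ be a polynomial, let 0 ≤ λ ≤ 1, and let m ∈ ℕ. Then E_{x∼N(0,1)^n}[ W^{=m}[g_{λ|x}] ] = Σ_{M ≥ m} binom(M,m)·λ^m·(1−λ)^{M−m}·W^{=M}[g]. -/

import Mathlib

open MeasureTheory ProbabilityTheory MvPolynomial

/-- The standard Gaussian measure `N(0,1)^n` on `ℝ^n`. -/
noncomputable def gaussianN (n : ℕ) : Measure (Fin n → ℝ) :=
  Measure.pi fun _ => gaussianReal 0 1

/-- The normalized probabilists' Hermite polynomial `h_k = H_k / √(k!)`. -/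
noncomputable def hermiteFn (k : ℕ) (t : ℝ) : ℝ :=
  ((Polynomial.hermite k).map (Int.castRingHom ℝ)).eval t / Real.sqrt (Nat.factorial k)

/-- The multivariate Hermite polynomial `h_α(x) = ∏ i, h_{α i}(x i)`. -/
noncomputable def hermiteMv {n : ℕ} (α : Fin n → ℕ) (x : Fin n → ℝ) : ℝ :=
  ∏ i, hermiteFn (α i) (x i)

/-- Hermite coefficient `f̂(α) = E_{x ∼ N(0,1)^n}[f(x)·h_α(x)]` of a function. -/
noncomputable def hermiteCoeffF {n : ℕ} (f : (Fin n → ℝ) → ℝ) (α : Fin n → ℕ) : ℝ :=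
  ∫ x, f x * hermiteMv α x ∂(gaussianN n)

/-- Hermite coefficient `ĝ(α)` of a polynomial. -/
noncomputable def hermiteCoeff {n : ℕ} (g : MvPolynomial (Fin n) ℝ) (α : Fin n → ℕ) : ℝ :=
  hermiteCoeffF (fun x => eval x g) α

/-- The squared Gaussian 2-norm `‖g‖₂² = E_{x ∼ N(0,1)^n}[g(x)²]`. -/
noncomputable def norm2sq {n : ℕ} (g : MvPolynomial (Fin n) ℝ) : ℝ :=
  ∫ x, (eval x g) ^ 2 ∂(gaussianN n)

/-- The `λ`-zoom of `g` at `x`: `g_{λ|x}(y) = g(√(1-λ)·x + √λ·y)`, as a polynomial in `y`. -/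
noncomputable def zoom {n : ℕ} (g : MvPolynomial (Fin n) ℝ) (lam : ℝ) (x : Fin n → ℝ) :
    MvPolynomial (Fin n) ℝ :=
  aeval (fun i => C (Real.sqrt (1 - lam) * x i) + C (Real.sqrt lam) * X i) g

/-- `HyperVar_R[g^{≥m}] = Σ_{|α| ≥ m} R^{2|α|}·ĝ(α)²`. -/
noncomputable def hyperVarGE {n : ℕ} (R : ℝ) (m : ℕ) (g : MvPolynomial (Fin n) ℝ) : ℝ :=
  ∑' α : Fin n → ℕ, if m ≤ ∑ i, α i then R ^ (2 * ∑ i, α i) * hermiteCoeff g α ^ 2 else 0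

/-- `HyperVar_R[g] = Σ_{α ≠ 0} R^{2|α|}·ĝ(α)²`. -/
noncomputable def hyperVar {n : ℕ} (R : ℝ) (g : MvPolynomial (Fin n) ℝ) : ℝ :=
  hyperVarGE R 1 g

/-- A nice distribution of polynomials of degree at most `d` on `ℝ^n`, indexed by
`υ ∈ ℝ^I`: each `g υ` has degree at most `d` and each coefficient of `g υ` is a
polynomial of degree at most `d` in `υ`. -/
def NiceFamily (n I d : ℕ) (g : (Fin I → ℝ) → MvPolynomial (Fin n) ℝ) : Prop :=
  (∀ υ, (g υ).totalDegree ≤ d) ∧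
  ∀ m : Fin n →₀ ℕ, ∃ P : MvPolynomial (Fin I) ℝ,
    P.totalDegree ≤ d ∧ ∀ υ, coeff m (g υ) = eval υ P

/-- Level-`m` Hermite weight `W^{=m}[g] = Σ_{|α| = m} ĝ(α)²`. -/
noncomputable def weightEq {n : ℕ} (m : ℕ) (g : MvPolynomial (Fin n) ℝ) : ℝ :=
  ∑' α : Fin n → ℕ, if (∑ i, α i) = m then hermiteCoeff g α ^ 2 else 0

/-!
If `a ^ 2 + b ^ 2 = 1`, Gaussian integration by parts gives
`E_y[H_k(a x + b y) H_j(y)] = k! / (k - j)! * b ^ j * a ^ (k - j) * H_{k-j}(x)`. With `a = √(1 - λ)`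
and `b = √λ` this normalises to `E_y[h_k(a x + b y) h_j(y)] = √(B_{k,j}(λ)) h_{k-j}(x)`, where
`B_{k,j}` is the Bernstein polynomial; `λ = 1` is orthonormality. So the `β`-coefficient of the
zoom at `x` is `Σ_{α ≥ β} ĝ(α) √P(α, β) h_{α-β}(x)`, where `P(α, β) = ∏ i, B_{α i, β i}(λ)` is the
probability of ending in `β` when each unit of `α` is kept independently with probability `λ`.
Parseval in `x` turns its second moment into `Σ_α P(α, β) ĝ(α)²`, and summing over `|β| = m` leaves
the probability `B_{|α|,m}(λ)` that `m` of the `|α|` units survive.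
-/

open Finset
open scoped NNReal Polynomial

section Bernstein

variable {R : Type*} [CommRing R]

lemma sum_antidiagonal_bernsteinPolynomial_mul (k l m : ℕ) :
    ∑ p ∈ antidiagonal m, bernsteinPolynomial R k p.1 * bernsteinPolynomial R l p.2 =
      bernsteinPolynomial R (k + l) m := by
  rw [bernsteinPolynomial, Nat.add_choose_eq, Nat.cast_sum, sum_mul, sum_mul]
  refine sum_congr rfl fun p hp => ?_
  obtain hk | hk := lt_or_ge k p.1
  · simp [bernsteinPolynomial, Nat.choose_eq_zero_of_lt hk]
  obtain hl | hl := lt_or_ge l p.2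
  · simp [bernsteinPolynomial, Nat.choose_eq_zero_of_lt hl]
  have hsub : k + l - m = (k - p.1) + (l - p.2) := by
    rw [← mem_antidiagonal.1 hp, tsub_add_tsub_comm hk hl]
  rw [hsub, ← mem_antidiagonal.1 hp, bernsteinPolynomial, bernsteinPolynomial, pow_add, pow_add]
  push_cast
  ring

lemma sum_piAntidiag_prod_bernsteinPolynomial {ι : Type*} [DecidableEq ι] (s : Finset ι)
    (α : ι → ℕ) (m : ℕ) :
    ∑ β ∈ piAntidiag s m, ∏ i ∈ s, bernsteinPolynomial R (α i) (β i) =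
      bernsteinPolynomial R (∑ i ∈ s, α i) m := by
  induction s using Finset.cons_induction generalizing m with
  | empty =>
    rcases eq_or_ne m 0 with rfl | hm
    · simp [bernsteinPolynomial]
    · simp [hm, bernsteinPolynomial.eq_zero_of_lt R (Nat.pos_of_ne_zero hm)]
  | cons i s hi ih =>
    rw [piAntidiag_cons, sum_disjiUnion, sum_cons, ← sum_antidiagonal_bernsteinPolynomial_mul]
    refine sum_congr rfl fun p _ => ?_
    rw [sum_map, ← ih, mul_sum]
    refine sum_congr rfl fun β hβ => ?_
    have hβi : β i = 0 := not_imp_comm.1 ((mem_piAntidiag.1 hβ).2 i) hi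
    rw [prod_cons]
    congr 1
    · simp [hβi]
    · refine prod_congr rfl fun j hj => ?_
      simp [ne_of_mem_of_not_mem hj hi]

end Bernstein

section Gaussian

variable {μ : ℝ} {v : ℝ≥0}

lemma hasDerivAt_gaussianPDFReal (μ : ℝ) (v : ℝ≥0) (t : ℝ) :
    HasDerivAt (gaussianPDFReal μ v) (-((t - μ) / v) * gaussianPDFReal μ v t) t := by
  have hexp : HasDerivAt (fun t => -(t - μ) ^ 2 / (2 * v)) (-((t - μ) / v)) t := by
    refine ((((hasDerivAt_id t).sub_const μ).pow 2).neg.div_const (2 * (v : ℝ))).congr_deriv ?_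
    simp only [id]
    field
  refine (hexp.exp.const_mul _).congr_deriv ?_
  rw [gaussianPDFReal]
  ring

lemma integrable_gaussianReal_iff {f : ℝ → ℝ} (hv : v ≠ 0) :
    Integrable f (gaussianReal μ v) ↔ Integrable fun t => gaussianPDFReal μ v t * f t := by
  rw [gaussianReal_of_var_ne_zero μ hv, integrable_withDensity_iff_integrable_smul'
    (measurable_gaussianPDF μ v) (ae_of_all _ fun _ => gaussianPDF_lt_top)]
  simp [toReal_gaussianPDF]

/-- Stein's lemma, that is, Gaussian integration by parts. -/
lemma integral_sub_mean_mul_gaussianReal {f f' : ℝ → ℝ} (hderiv : ∀ t, HasDerivAt f (f' t) t)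
    (hf : Integrable f (gaussianReal μ v)) (hf' : Integrable f' (gaussianReal μ v))
    (hmul : Integrable (fun t => (t - μ) * f t) (gaussianReal μ v)) :
    ∫ t, (t - μ) * f t ∂gaussianReal μ v = v * ∫ t, f' t ∂gaussianReal μ v := by
  rcases eq_or_ne v 0 with rfl | hv
  · simp
  rw [integrable_gaussianReal_iff hv] at hf hf' hmul
  have hzero := integral_eq_zero_of_hasDerivAt_of_integrable
    (f' := fun t => v * (gaussianPDFReal μ v t * f' t) - gaussianPDFReal μ v t * ((t - μ) * f t))
    (fun t => (((hasDerivAt_gaussianPDFReal μ v t).mul (hderiv t)).const_mul (v : ℝ)).congr_deriv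
      (by field)) ((hf'.const_mul _).sub hmul) (hf.const_mul _)
  rw [integral_sub (hf'.const_mul _) hmul, integral_const_mul, sub_eq_zero] at hzero
  simpa only [integral_gaussianReal_eq_integral_smul hv, smul_eq_mul] using hzero.symm

lemma integrable_eval_gaussianReal (p : ℝ[X]) :
    Integrable (fun t => p.eval t) (gaussianReal μ v) := by
  simp only [Polynomial.eval_eq_sum, Polynomial.sum]
  exact integrable_finsetSum _ fun k _ =>
    (integrable_pow_of_mem_interior_integrableExpSet (X := id) (by simp) k).const_mul _

/-- The expectation of a polynomial under `N(0,1)`, as a linear functional, so that integrals of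
polynomials can be computed by algebra alone. -/
noncomputable def gaussianExpectation : ℝ[X] →ₗ[ℝ] ℝ where
  toFun p := ∫ t, p.eval t ∂gaussianReal 0 1
  map_add' p q := by
    simpa using integral_add (integrable_eval_gaussianReal p) (integrable_eval_gaussianReal q)
  map_smul' c p := by simp [integral_const_mul]

lemma gaussianExpectation_apply (p : ℝ[X]) :
    gaussianExpectation p = ∫ t, p.eval t ∂gaussianReal 0 1 :=
  rfl

lemma gaussianExpectation_C_mul (c : ℝ) (p : ℝ[X]) :
    gaussianExpectation (Polynomial.C c * p) = c * gaussianExpectation p := by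
  rw [← Polynomial.smul_eq_C_mul, map_smul, smul_eq_mul]

lemma gaussianExpectation_one : gaussianExpectation 1 = 1 := by
  simp [gaussianExpectation_apply]

lemma gaussianExpectation_X_mul (p : ℝ[X]) :
    gaussianExpectation (Polynomial.X * p) = gaussianExpectation p.derivative := by
  have hX := integrable_eval_gaussianReal (μ := 0) (v := 1) (Polynomial.X * p)
  simpa [gaussianExpectation_apply] using
    integral_sub_mean_mul_gaussianReal (μ := 0) (v := 1) p.hasDerivAt
      (integrable_eval_gaussianReal p) (integrable_eval_gaussianReal _) (by simpa using hX)

end Gaussian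

section Hermite

lemma derivative_hermite (k : ℕ) :
    (Polynomial.hermite k).derivative = (k : ℤ[X]) * Polynomial.hermite (k - 1) := by
  induction k with
  | zero => simp
  | succ k ih =>
    have hrec : (k : ℤ[X]) * Polynomial.hermite k = (k : ℤ[X]) *
        (Polynomial.X * Polynomial.hermite (k - 1) - (Polynomial.hermite (k - 1)).derivative) := by
      cases k <;> simp [Polynomial.hermite_succ]
    rw [Polynomial.hermite_succ, ih]
    simp only [Polynomial.derivative_sub, Polynomial.derivative_mul, Polynomial.derivative_X,
      Polynomial.derivative_natCast, ih, add_tsub_cancel_right]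
    push_cast
    linear_combination -hrec

/-- The probabilists' Hermite polynomial `H_k` with real coefficients. -/
noncomputable def realHermite (k : ℕ) : ℝ[X] :=
  (Polynomial.hermite k).map (Int.castRingHom ℝ)

lemma realHermite_zero : realHermite 0 = 1 := by
  simp [realHermite]

lemma derivative_realHermite (k : ℕ) :
    (realHermite k).derivative = (k : ℝ[X]) * realHermite (k - 1) := by
  simp [realHermite, Polynomial.derivative_map, derivative_hermite]

lemma realHermite_succ (k : ℕ) :
    realHermite (k + 1) = Polynomial.X * realHermite k - (k : ℝ[X]) * realHermite (k - 1) := by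
  rw [← derivative_realHermite]
  simp [realHermite, Polynomial.hermite_succ, Polynomial.derivative_map]

lemma gaussianExpectation_mul_realHermite_succ (p : ℝ[X]) (k : ℕ) :
    gaussianExpectation (p * realHermite (k + 1)) =
      gaussianExpectation (p.derivative * realHermite k) := by
  have hX : p * realHermite (k + 1) =
      Polynomial.X * (p * realHermite k) - p * (realHermite k).derivative := by
    rw [realHermite_succ, derivative_realHermite]
    ring
  rw [hX, map_sub, gaussianExpectation_X_mul, Polynomial.derivative_mul, map_add,
    add_sub_cancel_right]

/-- The polynomial `H_k(a x + b y)` in `y`. -/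
noncomputable def affineHermite (a b x : ℝ) (k : ℕ) : ℝ[X] :=
  (realHermite k).comp (Polynomial.C (a * x) + Polynomial.C b * Polynomial.X)

lemma derivative_affineHermite (a b x : ℝ) (k : ℕ) :
    (affineHermite a b x k).derivative =
      Polynomial.C (b * k) * affineHermite a b x (k - 1) := by
  simp [affineHermite, Polynomial.derivative_comp, derivative_realHermite, mul_assoc]

lemma affineHermite_succ (a b x : ℝ) (k : ℕ) :
    affineHermite a b x (k + 1) =
      Polynomial.C (a * x) * affineHermite a b x k +
        Polynomial.C b * (Polynomial.X * affineHermite a b x k) -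
        Polynomial.C (k : ℝ) * affineHermite a b x (k - 1) := by
  simp only [affineHermite, realHermite_succ, Polynomial.sub_comp, Polynomial.mul_comp,
    Polynomial.X_comp, Polynomial.natCast_comp, map_natCast]
  ring

/-- The Hermite polynomials are eigenfunctions of the Ornstein–Uhlenbeck semigroup. -/
lemma gaussianExpectation_affineHermite {a b : ℝ} (hab : a ^ 2 + b ^ 2 = 1) (x : ℝ) (k : ℕ) :
    gaussianExpectation (affineHermite a b x k) = a ^ k * (realHermite k).eval x := by
  induction k using Nat.strong_induction_on with
  | _ k ih =>
    cases k with
    | zero => simp [affineHermite, realHermite_zero, gaussianExpectation_one]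
    | succ k =>
      have hpow : (k : ℝ) * a ^ (k + 1) = k * (a ^ 2 * a ^ (k - 1)) := by
        cases k with
        | zero => simp
        | succ k => rw [add_tsub_cancel_right, ← pow_add]; ring_nf
      rw [affineHermite_succ, map_sub, map_add, gaussianExpectation_C_mul,
        gaussianExpectation_C_mul, gaussianExpectation_X_mul, derivative_affineHermite,
        gaussianExpectation_C_mul, gaussianExpectation_C_mul, ih k (by lia), ih (k - 1) (by lia),
        realHermite_succ]
      simp only [Polynomial.eval_sub, Polynomial.eval_mul, Polynomial.eval_X,
        Polynomial.eval_natCast]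
      linear_combination (k * a ^ (k - 1) * (realHermite (k - 1)).eval x) * hab +
        (realHermite (k - 1)).eval x * hpow

lemma gaussianExpectation_affineHermite_mul_realHermite {a b : ℝ} (hab : a ^ 2 + b ^ 2 = 1)
    (x : ℝ) (k j : ℕ) :
    gaussianExpectation (affineHermite a b x k * realHermite j) =
      k.descFactorial j * b ^ j * a ^ (k - j) * (realHermite (k - j)).eval x := by
  induction j generalizing k with
  | zero => simp [realHermite_zero, gaussianExpectation_affineHermite hab]
  | succ j ih =>
    rw [gaussianExpectation_mul_realHermite_succ, derivative_affineHermite, mul_assoc,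
      gaussianExpectation_C_mul]
    cases k with
    | zero => simp
    | succ k =>
      rw [add_tsub_cancel_right, ih, Nat.succ_descFactorial_succ, Nat.add_sub_add_right]
      push_cast
      ring

lemma hermiteFn_eq (k : ℕ) (t : ℝ) : hermiteFn k t = (realHermite k).eval t / √k.factorial :=
  rfl

lemma hermiteFn_zero (t : ℝ) : hermiteFn 0 t = 1 := by
  simp [hermiteFn_eq, realHermite_zero]

lemma mul_hermiteFn (k : ℕ) (t : ℝ) :
    t * hermiteFn k t = √(k + 1) * hermiteFn (k + 1) t + √k * hermiteFn (k - 1) t := by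
  have hpred : √k * hermiteFn (k - 1) t = k * (realHermite (k - 1)).eval t / √k.factorial := by
    cases k with
    | zero => simp
    | succ k =>
      rw [hermiteFn_eq, Nat.factorial_succ, add_tsub_cancel_right]
      push_cast
      rw [Real.sqrt_mul (by positivity)]
      nth_rewrite 2 [← Real.mul_self_sqrt (show (0 : ℝ) ≤ k + 1 by positivity)]
      field
  rw [hpred, hermiteFn_eq, hermiteFn_eq, Nat.factorial_succ, realHermite_succ]
  push_cast
  rw [Real.sqrt_mul (by positivity)]
  simp only [Polynomial.eval_sub, Polynomial.eval_mul, Polynomial.eval_X,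
    Polynomial.eval_natCast]
  field

lemma hermiteFn_mul_hermiteFn_eq_eval (a b x y : ℝ) (k j : ℕ) :
    hermiteFn k (a * x + b * y) * hermiteFn j y =
      (√k.factorial * √j.factorial)⁻¹ * (affineHermite a b x k * realHermite j).eval y := by
  simp only [hermiteFn_eq, affineHermite, Polynomial.eval_mul, Polynomial.eval_comp,
    Polynomial.eval_add, Polynomial.eval_C, Polynomial.eval_X]
  field

lemma integrable_hermiteFn_mul (a b x : ℝ) (k j : ℕ) :
    Integrable (fun y => hermiteFn k (a * x + b * y) * hermiteFn j y) (gaussianReal 0 1) := by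
  simp only [hermiteFn_mul_hermiteFn_eq_eval]
  exact (integrable_eval_gaussianReal _).const_mul _

lemma sqrt_eval_bernsteinPolynomial {lam : ℝ} (h0 : 0 ≤ lam) (h1 : lam ≤ 1) (k j : ℕ) :
    √((bernsteinPolynomial ℝ k j).eval lam) =
      √(k.choose j) * (√lam ^ j * √(1 - lam) ^ (k - j)) := by
  have hsq : (bernsteinPolynomial ℝ k j).eval lam =
      k.choose j * (√lam ^ j * √(1 - lam) ^ (k - j)) ^ 2 := by
    rw [mul_pow, pow_right_comm, pow_right_comm √(1 - lam), Real.sq_sqrt h0,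
      Real.sq_sqrt (sub_nonneg.2 h1)]
    simp [bernsteinPolynomial, mul_assoc]
  rw [hsq, Real.sqrt_mul (Nat.cast_nonneg _), Real.sqrt_sq (by positivity)]

lemma descFactorial_mul_sqrt_factorial_sub {k j : ℕ} (hjk : j ≤ k) :
    (k.descFactorial j : ℝ) * √(k - j).factorial =
      √(k.choose j) * (√k.factorial * √j.factorial) := by
  have hfac : (√k.factorial : ℝ) = √(k.choose j) * √j.factorial * √(k - j).factorial := by
    rw [← Nat.choose_mul_factorial_mul_factorial hjk]
    push_cast
    rw [Real.sqrt_mul (by positivity), Real.sqrt_mul (by positivity)]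
  have hchoose := Real.mul_self_sqrt (Nat.cast_nonneg (α := ℝ) (k.choose j))
  have hj := Real.mul_self_sqrt (Nat.cast_nonneg (α := ℝ) j.factorial)
  calc (k.descFactorial j : ℝ) * √(k - j).factorial
      = (√j.factorial * √j.factorial) * (√(k.choose j) * √(k.choose j)) * √(k - j).factorial := by
        rw [hj, hchoose, Nat.descFactorial_eq_factorial_mul_choose, Nat.cast_mul]
    _ = √(k.choose j) * (√k.factorial * √j.factorial) := by
        rw [hfac]
        ring

lemma integral_hermiteFn_mul {lam : ℝ} (h0 : 0 ≤ lam) (h1 : lam ≤ 1) (x : ℝ) (k j : ℕ) :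
    ∫ y, hermiteFn k (√(1 - lam) * x + √lam * y) * hermiteFn j y ∂gaussianReal 0 1 =
      √((bernsteinPolynomial ℝ k j).eval lam) * hermiteFn (k - j) x := by
  have hab : √(1 - lam) ^ 2 + √lam ^ 2 = 1 := by
    rw [Real.sq_sqrt (sub_nonneg.2 h1), Real.sq_sqrt h0, sub_add_cancel]
  simp only [hermiteFn_mul_hermiteFn_eq_eval]
  rw [integral_const_mul, ← gaussianExpectation_apply,
    gaussianExpectation_affineHermite_mul_realHermite hab]
  obtain hjk | hjk := le_or_gt j k
  · have hnorm := descFactorial_mul_sqrt_factorial_sub hjk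
    have (i : ℕ) : √(i.factorial : ℝ) ≠ 0 := by positivity
    rw [sqrt_eval_bernsteinPolynomial h0 h1, hermiteFn_eq]
    field_simp
    linear_combination (√lam ^ j * √(1 - lam) ^ (k - j) * (realHermite (k - j)).eval x) * hnorm
  · simp [Nat.descFactorial_of_lt hjk, bernsteinPolynomial.eq_zero_of_lt ℝ hjk]

end Hermite

section Multivariate

variable {n : ℕ}

/-- The probability that the multi-index `α` becomes `β` when each of its `|α|` units is kept
independently with probability `lam`. -/
noncomputable def thinningProb (lam : ℝ) (α β : Fin n → ℕ) : ℝ :=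
  ∏ i, (bernsteinPolynomial ℝ (α i) (β i)).eval lam

lemma eval_bernsteinPolynomial_nonneg {lam : ℝ} (h0 : 0 ≤ lam) (h1 : lam ≤ 1) (k j : ℕ) :
    0 ≤ (bernsteinPolynomial ℝ k j).eval lam := by
  have := sub_nonneg.2 h1
  simp only [bernsteinPolynomial, Polynomial.eval_mul, Polynomial.eval_pow, Polynomial.eval_X,
    Polynomial.eval_sub, Polynomial.eval_one, Polynomial.eval_natCast]
  positivity

lemma thinningProb_nonneg {lam : ℝ} (h0 : 0 ≤ lam) (h1 : lam ≤ 1) (α β : Fin n → ℕ) :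
    0 ≤ thinningProb lam α β :=
  prod_nonneg fun _ _ => eval_bernsteinPolynomial_nonneg h0 h1 _ _

lemma thinningProb_eq_zero (lam : ℝ) {α β : Fin n → ℕ} (h : ¬∀ i, β i ≤ α i) :
    thinningProb lam α β = 0 := by
  obtain ⟨i, hi⟩ : ∃ i, α i < β i := by simpa using h
  exact prod_eq_zero (mem_univ i) (by simp [bernsteinPolynomial.eq_zero_of_lt ℝ hi])

lemma thinningProb_one (α β : Fin n → ℕ) : thinningProb 1 α β = if α = β then 1 else 0 := by
  simp only [thinningProb, bernsteinPolynomial.eval_at_1, prod_ite_zero, prod_const_one,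
    mem_univ, true_imp_iff, funext_iff, eq_comm (a := β _)]

lemma sum_piAntidiag_thinningProb (lam : ℝ) (α : Fin n → ℕ) (m : ℕ) :
    ∑ β ∈ piAntidiag univ m, thinningProb lam α β =
      (bernsteinPolynomial ℝ (∑ i, α i) m).eval lam := by
  rw [← sum_piAntidiag_prod_bernsteinPolynomial, Polynomial.eval_finsetSum]
  simp only [thinningProb, Polynomial.eval_prod]

lemma hermiteMv_zero (x : Fin n → ℝ) : hermiteMv 0 x = 1 := by
  simp [hermiteMv, hermiteFn_zero]

lemma integrable_hermiteMv_affine_mul (a b : ℝ) (x : Fin n → ℝ) (α β : Fin n → ℕ) :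
    Integrable (fun y => hermiteMv α (fun i => a * x i + b * y i) * hermiteMv β y)
      (gaussianN n) := by
  simp only [hermiteMv, ← prod_mul_distrib]
  exact Integrable.fintype_prod fun i => integrable_hermiteFn_mul a b (x i) (α i) (β i)

lemma integrable_hermiteMv_mul (α β : Fin n → ℕ) :
    Integrable (fun x => hermiteMv α x * hermiteMv β x) (gaussianN n) := by
  simpa using integrable_hermiteMv_affine_mul 0 1 0 α β

lemma hermiteCoeffF_hermiteMv_affine {lam : ℝ} (h0 : 0 ≤ lam) (h1 : lam ≤ 1) (x : Fin n → ℝ)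
    (α β : Fin n → ℕ) :
    hermiteCoeffF (fun y => hermiteMv α fun i => √(1 - lam) * x i + √lam * y i) β =
      √(thinningProb lam α β) * hermiteMv (α - β) x := by
  simp only [hermiteCoeffF, hermiteMv, gaussianN, ← prod_mul_distrib]
  rw [integral_fintype_prod_eq_prod (f := fun i t =>
    hermiteFn (α i) (√(1 - lam) * x i + √lam * t) * hermiteFn (β i) t), thinningProb,
    Real.sqrt_prod _ fun i _ => eval_bernsteinPolynomial_nonneg h0 h1 _ _, ← prod_mul_distrib]
  exact prod_congr rfl fun i _ => integral_hermiteFn_mul h0 h1 _ _ _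

lemma integral_hermiteMv_mul (α β : Fin n → ℕ) :
    ∫ x, hermiteMv α x * hermiteMv β x ∂gaussianN n = if α = β then 1 else 0 := by
  have h := hermiteCoeffF_hermiteMv_affine zero_le_one le_rfl 0 α β
  simp only [hermiteCoeffF, sub_self, Real.sqrt_zero, Real.sqrt_one, zero_mul, zero_add, one_mul,
    thinningProb_one] at h
  rw [h]
  split_ifs with hαβ
  · simp [hαβ, hermiteMv_zero]
  · simp

lemma integrable_sq_sum_hermiteMv {ι : Type*} (s : Finset ι) (d : ι → ℝ) (f : ι → Fin n → ℕ) :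
    Integrable (fun x => (∑ a ∈ s, d a * hermiteMv (f a) x) ^ 2) (gaussianN n) := by
  simp only [sq, sum_mul_sum, mul_mul_mul_comm (d _)]
  exact integrable_finsetSum _ fun a _ => integrable_finsetSum _ fun b _ =>
    (integrable_hermiteMv_mul (f a) (f b)).const_mul _

lemma integral_sq_sum_hermiteMv {ι : Type*} {s : Finset ι} (d : ι → ℝ) {f : ι → Fin n → ℕ}
    (hf : Set.InjOn f s) :
    ∫ x, (∑ a ∈ s, d a * hermiteMv (f a) x) ^ 2 ∂gaussianN n = ∑ a ∈ s, d a ^ 2 := by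
  have hint (a b : ι) : Integrable (fun x => d a * d b * (hermiteMv (f a) x * hermiteMv (f b) x))
      (gaussianN n) :=
    (integrable_hermiteMv_mul (f a) (f b)).const_mul _
  simp only [sq, sum_mul_sum, mul_mul_mul_comm (d _)]
  rw [integral_finsetSum _ fun a _ => integrable_finsetSum _ fun b _ => hint a b]
  refine sum_congr rfl fun a ha => ?_
  rw [integral_finsetSum _ fun b _ => hint a b, sum_eq_single_of_mem a ha]
  · simp [integral_const_mul, integral_hermiteMv_mul]
  · intro b hb hba
    simp [integral_const_mul, integral_hermiteMv_mul, mt (hf ha hb) hba.symm]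

lemma hermiteCoeffF_sum {ι : Type*} (s : Finset ι) (d : ι → ℝ) {f : ι → (Fin n → ℝ) → ℝ}
    {β : Fin n → ℕ}
    (hf : ∀ a ∈ s, Integrable (fun x => f a x * hermiteMv β x) (gaussianN n)) :
    hermiteCoeffF (fun x => ∑ a ∈ s, d a * f a x) β = ∑ a ∈ s, d a * hermiteCoeffF (f a) β := by
  simp only [hermiteCoeffF, sum_mul, mul_assoc]
  rw [integral_finsetSum _ fun a ha => (hf a ha).const_mul _]
  simp only [integral_const_mul]

lemma coord_mul_hermiteMv (α : Fin n → ℕ) (i : Fin n) (x : Fin n → ℝ) :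
    x i * hermiteMv α x =
      √(α i + 1) * hermiteMv (Function.update α i (α i + 1)) x +
      √(α i) * hermiteMv (Function.update α i (α i - 1)) x := by
  have hupdate (k : ℕ) : hermiteMv (Function.update α i k) x =
      hermiteFn k (x i) * ∏ j ∈ {i}ᶜ, hermiteFn (α j) (x j) := by
    rw [hermiteMv, Fintype.prod_eq_mul_prod_compl i, Function.update_self]
    congr 1
    refine prod_congr rfl fun j hj => ?_
    rw [Function.update_of_ne (by simpa using hj)]
  have hα := hupdate (α i)
  rw [Function.update_eq_self] at hα
  rw [hα, hupdate, hupdate]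
  linear_combination (∏ j ∈ {i}ᶜ, hermiteFn (α j) (x j)) * mul_hermiteFn (α i) (x i)

lemma eval_mem_span_hermiteMv (g : MvPolynomial (Fin n) ℝ) :
    (fun x => eval x g) ∈ Submodule.span ℝ (Set.range (hermiteMv (n := n))) := by
  set V := Submodule.span ℝ (Set.range (hermiteMv (n := n)))
  have hmem (α : Fin n → ℕ) : hermiteMv α ∈ V := Submodule.subset_span (Set.mem_range_self α)
  induction g using MvPolynomial.induction_on with
  | C a =>
    convert V.smul_mem a (hmem 0) using 1
    ext x
    simp [hermiteMv_zero]
  | add p q hp hq => simpa using! V.add_mem hp hq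
  | mul_X p i hp =>
    have hV : V ≤ V.comap (LinearMap.mulLeft ℝ fun x : Fin n → ℝ => x i) := by
      refine Submodule.span_le.2 (Set.range_subset_iff.2 fun α => ?_)
      have hcoord : (fun x => x i) * hermiteMv α =
          √(α i + 1) • hermiteMv (Function.update α i (α i + 1)) +
            √(α i) • hermiteMv (Function.update α i (α i - 1)) :=
        funext (coord_mul_hermiteMv α i)
      rw [SetLike.mem_coe, Submodule.mem_comap, LinearMap.mulLeft_apply, hcoord]
      exact V.add_mem (V.smul_mem _ (hmem _)) (V.smul_mem _ (hmem _))
    simpa [Pi.mul_def, mul_comm] using hV hp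

lemma exists_finsupp_hermite_expansion (g : MvPolynomial (Fin n) ℝ) :
    ∃ c : (Fin n → ℕ) →₀ ℝ, hermiteCoeff g = c ∧
      ∀ x, eval x g = ∑ α ∈ c.support, c α * hermiteMv α x := by
  obtain ⟨c, hc⟩ := Finsupp.mem_span_range_iff_exists_finsupp.1 (eval_mem_span_hermiteMv g)
  have heval (x : Fin n → ℝ) : eval x g = ∑ α ∈ c.support, c α * hermiteMv α x := by
    simpa [Finsupp.sum] using (congrFun hc x).symm
  refine ⟨c, funext fun β => ?_, heval⟩
  rw [hermiteCoeff, funext heval, hermiteCoeffF_sum _ _ fun α _ => integrable_hermiteMv_mul α β]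
  simp +contextual [hermiteCoeffF, integral_hermiteMv_mul, eq_comm]

lemma finite_support_hermiteCoeff (g : MvPolynomial (Fin n) ℝ) :
    (Function.support (hermiteCoeff g)).Finite := by
  obtain ⟨c, hc, -⟩ := exists_finsupp_hermite_expansion g
  exact hc ▸ c.hasFiniteSupport

/-- The finite set of multi-indices at which the Hermite coefficients of `g` do not vanish. -/
noncomputable def hermiteSupport (g : MvPolynomial (Fin n) ℝ) : Finset (Fin n → ℕ) :=
  (finite_support_hermiteCoeff g).toFinset

lemma hermiteCoeff_eq_zero {g : MvPolynomial (Fin n) ℝ} {α : Fin n → ℕ}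
    (hα : α ∉ hermiteSupport g) : hermiteCoeff g α = 0 := by
  simpa [hermiteSupport] using hα

lemma eval_eq_sum_hermiteCoeff (g : MvPolynomial (Fin n) ℝ) (x : Fin n → ℝ) :
    eval x g = ∑ α ∈ hermiteSupport g, hermiteCoeff g α * hermiteMv α x := by
  obtain ⟨c, hc, heval⟩ := exists_finsupp_hermite_expansion g
  have hsupp : hermiteSupport g = c.support := by
    ext α
    simp [hermiteSupport, hc]
  rw [heval, hsupp, hc]

lemma weightEq_eq_sum_piAntidiag (m : ℕ) (g : MvPolynomial (Fin n) ℝ) :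
    weightEq m g = ∑ α ∈ piAntidiag univ m, hermiteCoeff g α ^ 2 := by
  rw [weightEq, tsum_eq_sum (s := piAntidiag univ m) fun α hα => if_neg (by simpa using hα)]
  exact sum_congr rfl fun α hα => if_pos (by simpa using hα)

lemma weightEq_eq_sum_hermiteSupport (m : ℕ) (g : MvPolynomial (Fin n) ℝ) :
    weightEq m g = ∑ α ∈ hermiteSupport g with ∑ i, α i = m, hermiteCoeff g α ^ 2 := by
  rw [weightEq, tsum_eq_sum (s := hermiteSupport g) fun α hα => by simp [hermiteCoeff_eq_zero hα],
    sum_filter]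

lemma tsum_mul_weightEq (w : ℕ → ℝ) (g : MvPolynomial (Fin n) ℝ) :
    ∑' M, w M * weightEq M g = ∑ α ∈ hermiteSupport g, w (∑ i, α i) * hermiteCoeff g α ^ 2 := by
  have hterm (M : ℕ) : w M * weightEq M g = ∑ α ∈ hermiteSupport g with ∑ i, α i = M,
      w (∑ i, α i) * hermiteCoeff g α ^ 2 := by
    rw [weightEq_eq_sum_hermiteSupport, mul_sum]
    exact sum_congr rfl fun α hα => by rw [(mem_filter.1 hα).2]
  simp only [hterm]
  rw [tsum_eq_sum (s := (hermiteSupport g).image fun α => ∑ i, α i),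
    sum_fiberwise_of_maps_to fun α hα => mem_image_of_mem _ hα]
  intro M hM
  rw [filter_eq_empty_iff.2 fun α hα hαM => hM (mem_image.2 ⟨α, hα, hαM⟩), sum_empty]

lemma eval_zoom (g : MvPolynomial (Fin n) ℝ) (lam : ℝ) (x y : Fin n → ℝ) :
    eval y (zoom g lam x) = eval (fun i => √(1 - lam) * x i + √lam * y i) g := by
  rw [zoom, ← aeval_eq_eval, comp_aeval_apply, aeval_eq_eval]
  simp

lemma hermiteCoeff_zoom (g : MvPolynomial (Fin n) ℝ) {lam : ℝ} (h0 : 0 ≤ lam) (h1 : lam ≤ 1)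
    (x : Fin n → ℝ) (β : Fin n → ℕ) :
    hermiteCoeff (zoom g lam x) β = ∑ α ∈ hermiteSupport g with ∀ i, β i ≤ α i,
      hermiteCoeff g α * √(thinningProb lam α β) * hermiteMv (α - β) x := by
  have heval : (fun y => eval y (zoom g lam x)) = fun y => ∑ α ∈ hermiteSupport g,
      hermiteCoeff g α * hermiteMv α fun i => √(1 - lam) * x i + √lam * y i :=
    funext fun y => by rw [eval_zoom, eval_eq_sum_hermiteCoeff]
  rw [hermiteCoeff, heval,
    hermiteCoeffF_sum _ _ fun α _ => integrable_hermiteMv_affine_mul _ _ x α β, sum_filter]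
  refine sum_congr rfl fun α _ => ?_
  rw [hermiteCoeffF_hermiteMv_affine h0 h1]
  split_ifs with hβα
  · rw [mul_assoc]
  · simp [thinningProb_eq_zero lam hβα]

lemma integrable_sq_hermiteCoeff_zoom (g : MvPolynomial (Fin n) ℝ) {lam : ℝ} (h0 : 0 ≤ lam)
    (h1 : lam ≤ 1) (β : Fin n → ℕ) :
    Integrable (fun x => hermiteCoeff (zoom g lam x) β ^ 2) (gaussianN n) := by
  simp only [hermiteCoeff_zoom g h0 h1]
  exact integrable_sq_sum_hermiteMv _ _ _

lemma integral_sq_hermiteCoeff_zoom (g : MvPolynomial (Fin n) ℝ) {lam : ℝ} (h0 : 0 ≤ lam)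
    (h1 : lam ≤ 1) (β : Fin n → ℕ) :
    ∫ x, hermiteCoeff (zoom g lam x) β ^ 2 ∂gaussianN n =
      ∑ α ∈ hermiteSupport g, thinningProb lam α β * hermiteCoeff g α ^ 2 := by
  simp only [hermiteCoeff_zoom g h0 h1]
  have hinj : Set.InjOn (fun α => α - β) {α ∈ hermiteSupport g | ∀ i, β i ≤ α i} :=
    fun α hα α' hα' h => (tsub_left_inj hα.2 hα'.2).1 h
  rw [integral_sq_sum_hermiteMv _ (by simpa using hinj), sum_filter]
  refine sum_congr rfl fun α _ => ?_
  split_ifs with hβα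
  · rw [mul_pow, Real.sq_sqrt (thinningProb_nonneg h0 h1 α β), mul_comm]
  · rw [thinningProb_eq_zero lam hβα, zero_mul]

end Multivariate

/-- Expected level-`m` Hermite weight of a random zoom: for a polynomial `g`,
`0 ≤ λ ≤ 1` and `m ∈ ℕ`,
`E_{x ∼ N(0,1)^n}[W^{=m}[g_{λ|x}]] = Σ_{M ≥ m} C(M,m)·λ^m·(1-λ)^{M-m}·W^{=M}[g]`. -/
theorem expected_weight_of_zoom (n : ℕ) (g : MvPolynomial (Fin n) ℝ)
    (lam : ℝ) (h0 : 0 ≤ lam) (h1 : lam ≤ 1) (m : ℕ) :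
    (∫ x, weightEq m (zoom g lam x) ∂(gaussianN n)) =
      ∑' M : ℕ, if m ≤ M then
          (M.choose m : ℝ) * lam ^ m * (1 - lam) ^ (M - m) * weightEq M g
        else 0 := by
  calc ∫ x, weightEq m (zoom g lam x) ∂gaussianN n
      = ∑ β ∈ piAntidiag univ m, ∫ x, hermiteCoeff (zoom g lam x) β ^ 2 ∂gaussianN n := by
        simp only [weightEq_eq_sum_piAntidiag]
        exact integral_finsetSum _ fun β _ => integrable_sq_hermiteCoeff_zoom g h0 h1 β
    _ = ∑ α ∈ hermiteSupport g,
          (∑ β ∈ piAntidiag univ m, thinningProb lam α β) * hermiteCoeff g α ^ 2 := by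
        simp only [integral_sq_hermiteCoeff_zoom g h0 h1, sum_mul]
        exact sum_comm
    _ = ∑' M, (bernsteinPolynomial ℝ M m).eval lam * weightEq M g := by
        simp only [sum_piAntidiag_thinningProb]
        rw [tsum_mul_weightEq fun M => (bernsteinPolynomial ℝ M m).eval lam]
    _ = _ := by
        refine tsum_congr fun M => ?_
        split_ifs with hmM
        · simp [bernsteinPolynomial]
        · simp [bernsteinPolynomial.eq_zero_of_lt ℝ (not_le.1 hmM)]
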